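/- arXiv:math/0405211 — 3 statements merged into one kernel-verified Lean document; each statement's English description precedes it below -/
import Mathlib

section
/- Let G₁ and G₂ be countable groups, let G₁ * G₂ denote their free product, and let π : G₁ * G₂ → G₁ × G₂ be the canonical surjective homomorphism. Then the kernel of π is a countable free group. -/
open Monoid

/-!
Write `π : A ∗ B → A × B`. Every function `c : A × B → D` to a group `D` that vanishes on the two
axes extends to a homomorphism `ker π → D` sending each commutator `⁅a, b⁆` to `c (a, b)`. To see
this, map `B` to the wreath product `D ≀ᵣ (A × B)` by the standard embedding and `A` by the
conjugate of the standard embedding by the element `c` of the base group; on `ker π`, reading off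
the coordinate at `1` of the base component is multiplicative.

For `D` free on the symbols `⁅a, b⁆` with `a ≠ 1` and `b ≠ 1`, this gives a left inverse of the
evaluation `D → ker π`. It is also a right inverse: evaluation sends the coordinates of the wreath
product map to the Schreier elements `s q * x * (s (q * π x))⁻¹` of the section `s (a, b) = a * b`
of `π`.
-/

namespace CoprodToProd

open Coprod
open scoped commutatorElement

variable {A B D : Type*} [Group A] [Group B] [Group D]

section Cocycle

variable (c : A × B → D)

/-- The homomorphism `A ∗ B → D ≀ᵣ (A × B)` which is the standard embedding on `B` and its conjugate
by `c` on `A`. The inversion in the conjugating element compensates for the convention that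
`D ≀ᵣ Q` acts on functions by `x ↦ q⁻¹ * x`. -/
def wreathHom : Coprod A B →* D ≀ᵣ (A × B) :=
  Coprod.lift
    ((MulAut.conj (⟨fun q ↦ c q⁻¹, 1⟩ : D ≀ᵣ (A × B))).toMonoidHom.comp
      (RegularWreathProduct.inl.comp (MonoidHom.inl A B)))
    (RegularWreathProduct.inl.comp (MonoidHom.inr A B))

lemma wreathHom_right (x : Coprod A B) : (wreathHom c x).right = toProd x := by
  have rightHom_comp_wreathHom : RegularWreathProduct.rightHom.comp (wreathHom c) = toProd := by
    ext <;> simp [wreathHom]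
  exact DFunLike.congr_fun rightHom_comp_wreathHom x

/-- The coordinates of `wreathHom c`, reindexed by inversion so that they form a cocycle for the
right translation action of `A ∗ B` on `A × B`. -/
def cocycle (x : Coprod A B) (q : A × B) : D :=
  (wreathHom c x).left q⁻¹

lemma cocycle_inl (a : A) (q : A × B) : cocycle c (inl a) q = c q * (c (q * (a, 1)))⁻¹ := by
  simp [cocycle, wreathHom]

lemma cocycle_inr (b : B) (q : A × B) : cocycle c (inr b) q = 1 := by
  simp [cocycle, wreathHom]

lemma cocycle_mul (x y : Coprod A B) (q : A × B) :
    cocycle c (x * y) q = cocycle c x q * cocycle c y (q * toProd x) := by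
  simp [cocycle, wreathHom_right]

/-- The homomorphism `ker π → D` obtained by evaluating the cocycle of `c` at `1`. -/
def kerHom : (toProd : Coprod A B →* A × B).ker →* D :=
  MonoidHom.mk' (fun x ↦ cocycle c x 1) fun x y ↦ by
    simp [cocycle_mul, MonoidHom.mem_ker.mp x.2]

end Cocycle

/-- The commutator `⁅a, b⁆` in `A ∗ B`, as an element of the kernel of `A ∗ B → A × B`. -/
def kerCommutator (a : A) (b : B) : (toProd : Coprod A B →* A × B).ker :=
  ⟨⁅(inl a : Coprod A B), inr b⁆, by simp [MonoidHom.mem_ker, commutatorElement_def]⟩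

lemma kerCommutator_one_left (b : B) : kerCommutator (1 : A) b = 1 :=
  Subtype.ext <| by simp [kerCommutator]

lemma kerCommutator_one_right (a : A) : kerCommutator a (1 : B) = 1 :=
  Subtype.ext <| by simp [kerCommutator]

lemma kerHom_kerCommutator {c : A × B → D} (hc_one_right : ∀ a, c (a, 1) = 1)
    (hc_one_left : ∀ b, c (1, b) = 1) (a : A) (b : B) :
    kerHom c (kerCommutator a b) = c (a, b) := by
  calc kerHom c (kerCommutator a b)
      = c (1, 1) * (c (a, 1))⁻¹ * (c (a, b) * (c (1, b))⁻¹) := by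
        simp [kerHom, kerCommutator, commutatorElement_def, ← map_inv, cocycle_mul, cocycle_inl,
          cocycle_inr, Prod.one_eq_mk]
    _ = c (a, b) := by simp only [hc_one_right, hc_one_left, inv_one, one_mul, mul_one]

lemma coe_map_cocycle {c : A × B → D} {f : D →* (toProd : Coprod A B →* A × B).ker}
    (hf : ∀ q, f (c q) = kerCommutator q.1 q.2) (x : Coprod A B) (q : A × B) :
    (f (cocycle c x q) : Coprod A B) =
      inl q.1 * inr q.2 * x * (inl (q * toProd x).1 * inr (q * toProd x).2)⁻¹ := by
  induction x using Coprod.induction_on generalizing q with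
  | inl a => simp [cocycle_inl, hf, kerCommutator, commutatorElement_def, mul_assoc]
  | inr b => simp [cocycle_inr, mul_assoc]
  | mul x y hx hy =>
    rw [cocycle_mul, map_mul, Subgroup.coe_mul, hx, hy, map_mul, mul_assoc q]
    group

lemma map_kerHom {c : A × B → D} {f : D →* (toProd : Coprod A B →* A × B).ker}
    (hf : ∀ q, f (c q) = kerCommutator q.1 q.2) (x : (toProd : Coprod A B →* A × B).ker) :
    f (kerHom c x) = x :=
  Subtype.ext <| by
    simpa [kerHom, MonoidHom.mem_ker.mp x.2] using coe_map_cocycle hf x 1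

variable (A B) in
/-- The index set of the basis of commutators `⁅a, b⁆`. -/
abbrev BasisIndex := {a : A // a ≠ 1} × {b : B // b ≠ 1}

open Classical in
/-- The symbol standing for `⁅a, b⁆` in the free group on the nontrivial commutators; it is `1` if
`a = 1` or `b = 1`. -/
noncomputable def formalCommutator (q : A × B) : FreeGroup (BasisIndex A B) :=
  if h : q.1 ≠ 1 ∧ q.2 ≠ 1 then FreeGroup.of (⟨q.1, h.1⟩, ⟨q.2, h.2⟩) else 1

lemma formalCommutator_one_right (a : A) : formalCommutator (a, (1 : B)) = 1 := by
  simp [formalCommutator]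

lemma formalCommutator_one_left (b : B) : formalCommutator ((1 : A), b) = 1 := by
  simp [formalCommutator]

lemma formalCommutator_basisIndex (p : BasisIndex A B) :
    formalCommutator (p.1.1, p.2.1) = FreeGroup.of p :=
  dif_pos ⟨p.1.2, p.2.2⟩

/-- The evaluation of words in formal commutators. -/
def evalCommutators : FreeGroup (BasisIndex A B) →* (toProd : Coprod A B →* A × B).ker :=
  FreeGroup.lift fun p ↦ kerCommutator p.1.1 p.2.1

lemma evalCommutators_formalCommutator (q : A × B) :
    evalCommutators (formalCommutator q) = kerCommutator q.1 q.2 := by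
  obtain ⟨a, b⟩ := q
  by_cases ha : a = 1
  · simp [ha, formalCommutator_one_left, kerCommutator_one_left]
  by_cases hb : b = 1
  · simp [hb, formalCommutator_one_right, kerCommutator_one_right]
  · rw [formalCommutator_basisIndex (⟨a, ha⟩, ⟨b, hb⟩)]
    simp [evalCommutators]

lemma kerHom_comp_evalCommutators :
    (kerHom formalCommutator).comp evalCommutators = MonoidHom.id (FreeGroup (BasisIndex A B)) := by
  ext p
  simp [evalCommutators, formalCommutator_basisIndex,
    kerHom_kerCommutator formalCommutator_one_right formalCommutator_one_left]

variable (A B) in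
/-- The commutators `⁅a, b⁆` with `a ≠ 1` and `b ≠ 1`, as a basis of the kernel of
`A ∗ B → A × B`. -/
noncomputable def kerToProdBasis :
    FreeGroupBasis (BasisIndex A B) (toProd : Coprod A B →* A × B).ker :=
  .ofRepr <| MonoidHom.toMulEquiv (kerHom formalCommutator) evalCommutators
    (MonoidHom.ext <| map_kerHom evalCommutators_formalCommutator)
    kerHom_comp_evalCommutators

end CoprodToProd

/-- For countable groups `G₁`, `G₂`, the kernel of the canonical
surjective homomorphism `π : G₁ * G₂ → G₁ × G₂` from the free product (coproduct)
to the direct product is a countable free group. -/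
theorem kernel_toProd_countable_free (G₁ G₂ : Type*) [Group G₁] [Group G₂]
    [Countable G₁] [Countable G₂] :
    Countable ↥(Coprod.toProd : Coprod G₁ G₂ →* G₁ × G₂).ker ∧
      IsFreeGroup ↥(Coprod.toProd : Coprod G₁ G₂ →* G₁ × G₂).ker :=
  let commutators := CoprodToProd.kerToProdBasis G₁ G₂
  ⟨commutators.repr.toEquiv.countable_iff.mpr inferInstance, commutators.isFreeGroup⟩
end

section
/- Let G₁ and G₂ be countable groups, π : G₁ * G₂ → G₁ × G₂ the canonical surjective homomorphism, and C an infinite cyclic subgroup of G₁ × G₂. Then the preimage π⁻¹(C) is a countable free group. -/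
open Monoid

/-!
Let `G = G₁ * G₂` act on the cosets of a subgroup `H`. The action groupoid is connected with vertex
group `H`, and vertex groups of connected free groupoids are free, so it suffices that this groupoid
is free. Functors from it to a group amount to pairs of functors from the action groupoids of the
two factors, so the generators of these two, if they are free, together freely generate it. The
vertex groups of the latter are the stabilizers in the factors, and a groupoid all of whose vertex
groups are free is free: take a spanning forest and bases of the vertex groups at the roots.
If `H` is the preimage of a free subgroup `C` under a homomorphism that is injective on both
factors, then it embeds those stabilizers into conjugates of `C`, so they are free by the
Nielsen–Schreier theorem.
-/

open CategoryTheory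

universe u v w

/-- A spanning forest of a groupoid: a root in every connected component and an arrow from that
root to each object of the component, the arrow to the root itself being the identity. The arrow
is indexed by a proof of `root a = r` instead of starting at `root a`, so that the arrows to two
objects of one component have the same source. -/
structure SpanningForest (G : Type u) [Groupoid.{v} G] where
  root : G → G
  root_eq_of_hom : ∀ {a b : G}, (a ⟶ b) → root a = root b
  hom : ∀ {r a : G}, root a = r → (r ⟶ a)
  hom_self : ∀ {r : G} (hr : root r = r), hom hr = 𝟙 r

namespace SpanningForest

theorem nonempty (G : Type u) [Groupoid.{v} G] : Nonempty (SpanningForest G) := by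
  classical
  let _ := isIsomorphicSetoid G
  have hom_nonempty {r a : G} (h : (⟦a⟧ : Quotient (isIsomorphicSetoid G)).out = r) :
      Nonempty (r ⟶ a) := by
    obtain ⟨e⟩ : IsIsomorphic r a := h ▸ Quotient.mk_out a
    exact ⟨e.hom⟩
  exact ⟨{
    root := fun a => (⟦a⟧ : Quotient (isIsomorphicSetoid G)).out
    root_eq_of_hom := fun f => congrArg Quotient.out (Quotient.sound ⟨asIso f⟩)
    hom := fun {r a} h => if e : r = a then eqToHom e else (hom_nonempty h).some
    hom_self := fun _ => by simp }⟩

variable {G : Type u} [Groupoid.{v} G] (T : SpanningForest G)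

theorem root_root (a : G) : T.root (T.root a) = T.root a :=
  T.root_eq_of_hom (T.hom rfl)

/-- The loop at the root obtained from an arrow by conjugating with the arrows of the forest. -/
noncomputable def loop {r a b : G} (ha : T.root a = r) (hb : T.root b = r) (g : a ⟶ b) : End r :=
  T.hom ha ≫ g ≫ inv (T.hom hb)

theorem loop_id {r a : G} (ha : T.root a = r) : T.loop ha ha (𝟙 a) = 1 := by
  simp [loop, End.one_def]

theorem loop_comp {r a b c : G} (ha : T.root a = r) (hb : T.root b = r) (hc : T.root c = r)
    (g : a ⟶ b) (h : b ⟶ c) : T.loop ha hc (g ≫ h) = T.loop hb hc h * T.loop ha hb g := by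
  simp [loop, End.mul_def]

theorem loop_hom {r a : G} (hr : T.root r = r) (ha : T.root a = r) :
    T.loop hr ha (T.hom ha) = 1 := by
  simp [loop, hom_self, End.one_def]

theorem loop_self {r : G} (hr : T.root r = r) (g : End r) : T.loop hr hr g = g := by
  simp [loop, hom_self]

theorem hom_comp_eq_loop_comp_hom {r a b : G} (ha : T.root a = r) (hb : T.root b = r)
    (g : a ⟶ b) : T.hom ha ≫ g = (T.loop ha hb g : r ⟶ r) ≫ T.hom hb := by
  simp [loop]

variable {X : Type w} [Group X]

/-- The functor to a group with value `τ a` on the arrow of the forest to `a` and restricting to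
`φ r` on the vertex group of a root `r`, provided that `τ` is trivial on roots. -/
noncomputable def functorOfLoops (τ : G → X) (φ : ∀ r, T.root r = r → End r →* X) :
    G ⥤ SingleObj X where
  obj _ := SingleObj.star X
  map {a b} g :=
    τ b * φ (T.root a) (T.root_root a) (T.loop rfl (T.root_eq_of_hom g).symm g) * (τ a)⁻¹
  map_id a := by
    rw [loop_id, map_one, mul_one, mul_inv_cancel, SingleObj.id_as_one]
  map_comp {a b c} g h := by
    have loop_eq {r : G} (hr : T.root b = r) (hr' : T.root r = r) :
        φ (T.root b) (T.root_root b) (T.loop rfl (T.root_eq_of_hom h).symm h) =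
          φ r hr' (T.loop hr ((T.root_eq_of_hom h).symm.trans hr) h) := by
      subst hr
      rfl
    have hb : T.root b = T.root a := (T.root_eq_of_hom g).symm
    rw [SingleObj.comp_as_mul, loop_eq hb (T.root_root a), T.loop_comp rfl hb, map_mul]
    group

theorem functorOfLoops_map (τ : G → X) (φ : ∀ r, T.root r = r → End r →* X) {r a b : G}
    (hr : T.root r = r) (ha : T.root a = r) (hb : T.root b = r) (g : a ⟶ b) :
    (T.functorOfLoops τ φ).map g = τ b * φ r hr (T.loop ha hb g) * (τ a)⁻¹ := by
  subst ha
  rfl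

theorem map_eq_conj_map_loop (F : G ⥤ SingleObj X) {r a b : G} (ha : T.root a = r)
    (hb : T.root b = r) (g : a ⟶ b) :
    (F.map g : X) = F.map (T.hom hb) * F.map (T.loop ha hb g) * (F.map (T.hom ha) : X)⁻¹ := by
  have hcomp := congrArg F.map (T.hom_comp_eq_loop_comp_hom ha hb g)
  rw [F.map_comp, F.map_comp, SingleObj.comp_as_mul, SingleObj.comp_as_mul] at hcomp
  exact eq_mul_inv_of_mul_eq hcomp

theorem functor_ext {F F' : G ⥤ SingleObj X}
    (hhom : ∀ a, T.root a ≠ a → (F.map (T.hom (a := a) rfl) : X) = F'.map (T.hom (a := a) rfl))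
    (hend : ∀ r, T.root r = r → ∀ g : End r, (F.map g : X) = F'.map g) : F = F' := by
  have map_hom_eq {r a : G} (ha : T.root a = r) : (F.map (T.hom ha) : X) = F'.map (T.hom ha) := by
    by_cases har : r = a
    · subst har
      rw [T.hom_self, F.map_id, F'.map_id]
      rfl
    · subst ha
      exact hhom a har
  refine Functor.hext (fun _ => rfl) fun a b g => heq_of_eq ?_
  have hb := (T.root_eq_of_hom g).symm
  calc (F.map g : X)
      = F.map (T.hom hb) * F.map (T.loop rfl hb g) * (F.map (T.hom (a := a) rfl) : X)⁻¹ :=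
        T.map_eq_conj_map_loop F rfl hb g
    _ = F'.map (T.hom hb) * F'.map (T.loop rfl hb g) * (F'.map (T.hom (a := a) rfl) : X)⁻¹ := by
        rw [map_hom_eq, map_hom_eq, hend _ (T.root_root a)]
    _ = F'.map g := (T.map_eq_conj_map_loop F' rfl hb g).symm

section FreeVertexGroups

variable [∀ a : G, IsFreeGroup (End a)]

/-- The generating arrows with target `b`, indexed by their source, of a groupoid with free vertex
groups: the arrows of the forest to objects other than the roots and a basis of the vertex group
of every root. -/
inductive Generator (b : G) : G → Type v
  | tree (hb : T.root b ≠ b) : Generator b (T.root b)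
  | loop (hb : T.root b = b) (e : IsFreeGroup.Generators (End b)) : Generator b b

variable {T} in
/-- The arrow of the groupoid named by a generator. -/
noncomputable def Generator.toHom {a b : G} : T.Generator b a → (a ⟶ b)
  | tree _ => T.hom rfl
  | loop _ e => (IsFreeGroup.of e : End b)

theorem functor_ext_toHom {F F' : G ⥤ SingleObj X}
    (h : ∀ a b (e : T.Generator b a), (F.map e.toHom : X) = F'.map e.toHom) : F = F' := by
  refine T.functor_ext (fun a ha => h _ a (.tree ha)) fun r hr g => ?_
  have mapEnd_eq : (F.mapEnd r : End r →* X) = F'.mapEnd r :=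
    IsFreeGroup.ext_hom fun e => h r r (.loop hr e)
  exact DFunLike.congr_fun mapEnd_eq g

theorem existsUnique_functor_map_toHom (f : ∀ a b, T.Generator b a → X) :
    ∃! F : G ⥤ SingleObj X, ∀ a b (e : T.Generator b a), (F.map e.toHom : X) = f a b e := by
  classical
  let τ (a : G) : X := if ha : T.root a = a then 1 else f _ a (.tree ha)
  let φ (r : G) (hr : T.root r = r) : End r →* X := IsFreeGroup.lift fun e => f r r (.loop hr e)
  have τ_root {r : G} (hr : T.root r = r) : τ r = 1 := dif_pos hr
  have map_toHom : ∀ a b (e : T.Generator b a), (T.functorOfLoops τ φ).map e.toHom = f a b e := by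
    rintro _ b (hb | ⟨hb, e⟩)
    · have hr := T.root_root b
      rw [Generator.toHom, T.functorOfLoops_map τ φ hr hr rfl, T.loop_hom, map_one, mul_one,
        τ_root hr, inv_one, mul_one]
      exact dif_neg hb
    · rw [Generator.toHom, T.functorOfLoops_map τ φ hb hb hb, T.loop_self, τ_root hb, inv_one,
        one_mul, mul_one]
      exact IsFreeGroup.lift_of _ e
  exact ⟨T.functorOfLoops τ φ, map_toHom, fun F hF =>
    T.functor_ext_toHom fun a b e => (hF a b e).trans (map_toHom a b e).symm⟩

end FreeVertexGroups

end SpanningForest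

/-- A groupoid with free vertex groups is free, on the generators given by a spanning forest. -/
noncomputable abbrev isFreeGroupoidOfIsFreeGroupEnd (G : Type u) [Groupoid.{v} G]
    [∀ a : G, IsFreeGroup (End a)] : IsFreeGroupoid G :=
  let T := (SpanningForest.nonempty G).some
  { quiverGenerators := ⟨fun a b => T.Generator b a⟩
    of := SpanningForest.Generator.toHom
    unique_lift := T.existsUnique_functor_map_toHom }

section ActionCategory

variable {G A X : Type*} [Group G] [MulAction G A] [Group X]

theorem actionCategory_curry_injective : Function.Injective
    (ActionCategory.curry : (ActionCategory G A ⥤ SingleObj X) → _) := by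
  intro F F' h
  refine Functor.hext (fun _ => rfl) fun _ _ f => heq_of_eq ?_
  induction f using ActionCategory.cases with
  | hyp t g => exact congrFun (congrArg SemidirectProduct.left (DFunLike.congr_fun h g)) t

theorem actionCategory_curry_uncurry (Φ : G →* (A → X) ⋊[mulAutArrow] G)
    (hΦ : ∀ g, (Φ g).right = g) :
    ActionCategory.curry (ActionCategory.uncurry Φ hΦ) = Φ := by
  ext g : 1
  exact SemidirectProduct.ext rfl (hΦ g).symm

/-- The inclusion of the action groupoid of a subgroup into that of the whole group. -/
def subgroupInclusion (K : Subgroup G) (A : Type*) [MulAction G A] :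
    ActionCategory K A ⥤ ActionCategory G A where
  obj a := (a.back : ActionCategory G A)
  map f := ⟨K.subtype f.1, f.2⟩

/-- The inclusion of unrestricted wreath products over `A` induced by a subgroup of the acting
group. -/
def wreathInclusion (K : Subgroup G) (A X : Type*) [MulAction G A] [Group X] :
    (A → X) ⋊[mulAutArrow] K →* (A → X) ⋊[mulAutArrow] G :=
  SemidirectProduct.map (MonoidHom.id _) K.subtype fun _ => rfl

theorem wreathInclusion_injective (K : Subgroup G) :
    Function.Injective (wreathInclusion K A X) := fun x y h => by
  have hleft := congrArg SemidirectProduct.left h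
  have hright := congrArg SemidirectProduct.right h
  exact SemidirectProduct.ext hleft (Subtype.ext hright)

theorem actionCategory_curry_comp_subtype (K : Subgroup G) (F : ActionCategory G A ⥤ SingleObj X) :
    (ActionCategory.curry F).comp K.subtype =
      (wreathInclusion K A X).comp (ActionCategory.curry (subgroupInclusion K A ⋙ F)) :=
  rfl

theorem subgroupInclusion_comp_uncurry_eq {K : Subgroup G}
    {Φ : G →* (A → X) ⋊[mulAutArrow] G} (hΦ : ∀ g, (Φ g).right = g)
    {F : ActionCategory K A ⥤ SingleObj X}
    (hF : Φ.comp K.subtype = (wreathInclusion K A X).comp (ActionCategory.curry F)) :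
    subgroupInclusion K A ⋙ ActionCategory.uncurry Φ hΦ = F := by
  apply actionCategory_curry_injective
  rw [← MonoidHom.cancel_left (wreathInclusion_injective K), ← actionCategory_curry_comp_subtype,
    actionCategory_curry_uncurry, hF]

/-- The action groupoid of an action with free stabilizers is free. -/
noncomputable abbrev isFreeGroupoidOfIsFreeGroupStabilizer
    (h : ∀ a : A, IsFreeGroup (MulAction.stabilizer G a)) : IsFreeGroupoid (ActionCategory G A) :=
  -- Instance search does not unfold the category structure of the groupoid `ActionCategory G A` to
  -- that of the category `ActionCategory G A`, hence the explicit choice here and below.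
  have (a : ActionCategory G A) :
      IsFreeGroup (@End (ActionCategory G A) Groupoid.toCategory.toCategoryStruct a) :=
    have := h a.back
    IsFreeGroup.ofMulEquiv (G := MulAction.stabilizer G a.back)
      (ActionCategory.stabilizerIsoEnd G a.back :)
  isFreeGroupoidOfIsFreeGroupEnd _

theorem isFreeGroup_of_isFreeGroupoid_quotient {G : Type u} [Group G] (H : Subgroup G)
    [IsFreeGroupoid (ActionCategory G (G ⧸ H))] : IsFreeGroup H :=
  have : @IsConnected (ActionCategory G (G ⧸ H)) Groupoid.toCategory :=
    inferInstanceAs (IsConnected (ActionCategory G (G ⧸ H)))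
  have := IsFreeGroupoid.endIsFreeOfConnectedFree
    (ActionCategory.objEquiv G (G ⧸ H) ((1 : G) : G ⧸ H))
  IsFreeGroup.ofMulEquiv
    (G := @End (ActionCategory G (G ⧸ H)) Groupoid.toCategory.toCategoryStruct _)
    (ActionCategory.endMulEquivSubgroup H :)

variable {G₁ G₂ : Type*} [Group G₁] [Group G₂] [MulAction (Coprod G₁ G₂) A]

theorem existsUnique_functor_coprod
    (F₁ : ActionCategory (Coprod.inl : G₁ →* Coprod G₁ G₂).range A ⥤ SingleObj X)
    (F₂ : ActionCategory (Coprod.inr : G₂ →* Coprod G₁ G₂).range A ⥤ SingleObj X) :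
    ∃! F : ActionCategory (Coprod G₁ G₂) A ⥤ SingleObj X,
      subgroupInclusion _ A ⋙ F = F₁ ∧ subgroupInclusion _ A ⋙ F = F₂ := by
  let Φ₁ := (wreathInclusion _ A X).comp (ActionCategory.curry F₁)
  let Φ₂ := (wreathInclusion _ A X).comp (ActionCategory.curry F₂)
  let Φ : Coprod G₁ G₂ →* (A → X) ⋊[mulAutArrow] Coprod G₁ G₂ :=
    Coprod.lift (Φ₁.comp (MonoidHom.rangeRestrict _)) (Φ₂.comp (MonoidHom.rangeRestrict _))
  have rightHom_comp_Φ : SemidirectProduct.rightHom.comp Φ = MonoidHom.id _ :=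
    Coprod.hom_ext rfl rfl
  have hΦ : ∀ g, (Φ g).right = g := DFunLike.congr_fun rightHom_comp_Φ
  have hΦ₁ : Φ.comp (Subgroup.subtype _) = Φ₁ := by
    ext ⟨_, g, rfl⟩ : 1
    rfl
  have hΦ₂ : Φ.comp (Subgroup.subtype _) = Φ₂ := by
    ext ⟨_, g, rfl⟩ : 1
    rfl
  refine ⟨ActionCategory.uncurry Φ hΦ, ⟨subgroupInclusion_comp_uncurry_eq hΦ hΦ₁,
    subgroupInclusion_comp_uncurry_eq hΦ hΦ₂⟩, ?_⟩
  rintro F ⟨rfl, rfl⟩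
  apply actionCategory_curry_injective
  rw [actionCategory_curry_uncurry]
  exact Coprod.hom_ext rfl rfl

/-- If the action groupoids of both factors of a free product are free, then so is that of the free
product, on the union of their generators. -/
noncomputable abbrev isFreeGroupoidCoprod
    (I₁ : IsFreeGroupoid (ActionCategory (Coprod.inl : G₁ →* Coprod G₁ G₂).range A))
    (I₂ : IsFreeGroupoid (ActionCategory (Coprod.inr : G₂ →* Coprod G₁ G₂).range A)) :
    IsFreeGroupoid (ActionCategory (Coprod G₁ G₂) A) where
  quiverGenerators := ⟨fun a b =>
    I₁.quiverGenerators.Hom (a.back : ActionCategory _ A) (b.back : ActionCategory _ A) ⊕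
      I₂.quiverGenerators.Hom (a.back : ActionCategory _ A) (b.back : ActionCategory _ A)⟩
  of := Sum.elim (fun e => (subgroupInclusion _ A).map (I₁.of e))
    (fun e => (subgroupInclusion _ A).map (I₂.of e))
  unique_lift := by
    intro X _ f
    obtain ⟨F₁, hF₁, unique₁⟩ := I₁.unique_lift fun a b e =>
      f (a := (subgroupInclusion _ A).obj a) (b := (subgroupInclusion _ A).obj b) (.inl e)
    obtain ⟨F₂, hF₂, unique₂⟩ := I₂.unique_lift fun a b e =>
      f (a := (subgroupInclusion _ A).obj a) (b := (subgroupInclusion _ A).obj b) (.inr e)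
    obtain ⟨F, ⟨rfl, rfl⟩, unique⟩ := existsUnique_functor_coprod F₁ F₂
    refine ⟨F, ?_, fun F' hF' => unique F' ⟨?_, ?_⟩⟩
    · rintro a b (e | e)
      · exact hF₁ _ _ e
      · exact hF₂ _ _ e
    · exact unique₁ _ fun a b e => hF' _ _ (.inl e)
    · exact unique₂ _ fun a b e => hF' _ _ (.inr e)

theorem isFreeGroup_of_isFreeGroup_stabilizer_coprod (H : Subgroup (Coprod G₁ G₂))
    (h₁ : ∀ a : Coprod G₁ G₂ ⧸ H,
      IsFreeGroup (MulAction.stabilizer (Coprod.inl : G₁ →* Coprod G₁ G₂).range a))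
    (h₂ : ∀ a : Coprod G₁ G₂ ⧸ H,
      IsFreeGroup (MulAction.stabilizer (Coprod.inr : G₂ →* Coprod G₁ G₂).range a)) :
    IsFreeGroup H := by
  let _ := isFreeGroupoidCoprod (isFreeGroupoidOfIsFreeGroupStabilizer h₁)
    (isFreeGroupoidOfIsFreeGroupStabilizer h₂)
  exact isFreeGroup_of_isFreeGroupoid_quotient H

end ActionCategory

theorem isFreeGroup_of_injective {G H : Type*} [Group G] [Group H] [IsFreeGroup H] {f : G →* H}
    (hf : Function.Injective f) : IsFreeGroup G :=
  IsFreeGroup.ofMulEquiv (MonoidHom.ofInjective hf).symm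

theorem injOn_range_of_injective_comp {K G Q : Type*} [Group K] [Group G] [Group Q] {i : K →* G}
    {p : G →* Q} (h : Function.Injective (p.comp i)) : Set.InjOn p i.range := by
  rw [MonoidHom.coe_range]
  exact Function.Injective.injOn_range h

theorem isFreeGroup_stabilizer_quotient_comap {G Q : Type*} [Group G] [Group Q]
    {K : Subgroup G} {p : G →* Q} (hK : Set.InjOn p K) (C : Subgroup Q) [IsFreeGroup C]
    (a : G ⧸ C.comap p) : IsFreeGroup (MulAction.stabilizer K a) := by
  obtain ⟨y, rfl⟩ := QuotientGroup.mk_surjective a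
  let conj : MulAction.stabilizer K (y : G ⧸ C.comap p) →* Q :=
    (MulAut.conj (p y)⁻¹).toMonoidHom.comp (p.comp (K.subtype.comp (Subgroup.subtype _)))
  have conj_mem (g) : conj g ∈ C := by
    have hg : ((g.1 * y : G) : G ⧸ C.comap p) = y := g.2
    simpa [conj, mul_assoc] using QuotientGroup.eq.1 hg.symm
  refine isFreeGroup_of_injective (f := conj.codRestrict C conj_mem) ?_
  rw [MonoidHom.injective_codRestrict]
  refine (MulAut.conj (p y)⁻¹).injective.comp fun g h hgh => ?_
  exact Subtype.ext (Subtype.ext (hK g.1.2 h.1.2 hgh))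

theorem isFreeGroup_of_isCyclic_of_infinite (G : Type*) [Group G] [IsCyclic G] [Infinite G] :
    IsFreeGroup G :=
  IsFreeGroup.ofMulEquiv
    ((FreeGroup.mulEquivIntOfUnique (α := Unit)).trans intCyclicMulEquiv)

instance countable_coprod {M N : Type*} [MulOneClass M] [MulOneClass N] [Countable M]
    [Countable N] : Countable (Coprod M N) :=
  Coprod.mk_surjective.countable

theorem preimage_infinite_cyclic_countable_free_general {G₁ G₂ Q : Type*} [Group G₁]
    [Group G₂] [Group Q] (p : Coprod G₁ G₂ →* Q) (hinl : Function.Injective (p.comp Coprod.inl))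
    (hinr : Function.Injective (p.comp Coprod.inr)) (C : Subgroup Q) [IsFreeGroup C] :
    IsFreeGroup (C.comap p) :=
  isFreeGroup_of_isFreeGroup_stabilizer_coprod _
    (isFreeGroup_stabilizer_quotient_comap (injOn_range_of_injective_comp hinl) C)
    (isFreeGroup_stabilizer_quotient_comap (injOn_range_of_injective_comp hinr) C)

/-- For countable groups `G₁`, `G₂`, the canonical surjective
homomorphism `π : G₁ * G₂ → G₁ × G₂`, and an infinite cyclic subgroup `C` of
`G₁ × G₂`, the preimage `π⁻¹(C)` is a countable free group. -/
theorem preimage_infinite_cyclic_countable_free (G₁ G₂ : Type*) [Group G₁] [Group G₂]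
    [Countable G₁] [Countable G₂] (C : Subgroup (G₁ × G₂))
    (hcyc : IsCyclic C) (hinf : Infinite C) :
    Countable ↥(C.comap (Coprod.toProd : Coprod G₁ G₂ →* G₁ × G₂)) ∧
      IsFreeGroup ↥(C.comap (Coprod.toProd : Coprod G₁ G₂ →* G₁ × G₂)) := by
  have := isFreeGroup_of_isCyclic_of_infinite C
  exact ⟨inferInstance, preimage_infinite_cyclic_countable_free_general _
    (Prod.mk_left_injective 1) (Prod.mk_right_injective 1) C⟩
end

section
/- Let G₁ and G₂ be countable groups, π : G₁ * G₂ → G₁ × G₂ the canonical surjective homomorphism, and C a finite subgroup of G₁ × G₂. Then the preimage π⁻¹(C) contains a free subgroup of finite index. -/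
open Monoid
open scoped commutatorElement

/-!
Let `π : A * B → A × B` be the canonical homomorphism. Its kernel `N` is free on the commutators
`⁅a⁻¹, b⁻¹⁆` with `a ≠ 1` and `b ≠ 1`. Indeed, every element of `A * B` is of the form `b * a * n`
with `n ∈ N`, and
`a' * (b * a * n) = b * (a' * a) * (⁅(a' * a)⁻¹, b⁻¹⁆ * ⁅a⁻¹, b⁻¹⁆⁻¹ * n)`.
With the commutators replaced by generators of a free group `F`, the formula still defines an action
of `A`, now on `B × A × F`, because it is translation by `a'` conjugated by a shear. Together with
translation by `B` this gives an action of `A * B`, whose orbit map at `(1, 1, 1)` reads off from an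
element of `A * B` its coordinates `(b, a, n)`. Hence the commutators generate `N` and satisfy no
relations. Finally, `N` has finite index in `π⁻¹(C)` for finite `C`, as `π` embeds the quotient
in `C`.
-/

section TwistedAction

/-- The permutation `(b, a, h) ↦ (b, a, c a b * h)` of `B × A × H`, by which left translation on
the middle factor is twisted. -/
def shear {A B H : Type*} [Group H] (c : A → B → H) : Equiv.Perm (B × A × H) :=
  Equiv.prodCongrRight fun b => Equiv.prodShear (Equiv.refl A) fun a => Equiv.mulLeft (c a b)

/-- The action of `G` on `G × X` by left translation of the first factor. -/
def fstTranslation (G X : Type*) [Group G] : G →* Equiv.Perm (G × X) where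
  toFun g := (Equiv.mulLeft g).prodCongr (Equiv.refl X)
  map_one' := by ext <;> simp
  map_mul' g₁ g₂ := by ext <;> simp [mul_assoc]

/-- The action of `G` on `Y × G × X` by left translation of the middle factor. -/
def midTranslation (Y G X : Type*) [Group G] : G →* Equiv.Perm (Y × G × X) where
  toFun g := (Equiv.refl Y).prodCongr (fstTranslation G X g)
  map_one' := by ext <;> simp
  map_mul' g₁ g₂ := by ext <;> simp

variable {A B H : Type*} [Group A] [Group B] [Group H]

/-- The action of the free product `A * B` on `B × A × H` in which `B` acts by left translation and
`A` by left translation conjugated by `shear c`. If `c a b` stands for `⁅a⁻¹, b⁻¹⁆`, this models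
left multiplication on the products `b * a * h` in `A * B`. -/
def twistedAction (c : A → B → H) : Coprod A B →* Equiv.Perm (B × A × H) :=
  Coprod.lift ((MulAut.conj (shear c)).toMonoidHom.comp (midTranslation B A H))
    (fstTranslation B (A × H))

/-- The commutator `⁅a⁻¹, b⁻¹⁆` in the free product `A * B`. -/
def invCommutator (a : A) (b : B) : Coprod A B :=
  ⁅(Coprod.inl a : Coprod A B)⁻¹, (Coprod.inr b)⁻¹⁆

/-- The element `b * a * ψ h` of the free product `A * B` with coordinates `(b, a, h)`. -/
def coordProd (ψ : H →* Coprod A B) : B × A × H → Coprod A B :=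
  fun (b, a, h) => Coprod.inr b * Coprod.inl a * ψ h

lemma invCommutator_one_left (b : B) : invCommutator (1 : A) b = 1 := by
  simp [invCommutator]

lemma invCommutator_one_right (a : A) : invCommutator a (1 : B) = 1 := by
  simp [invCommutator]

variable (c : A → B → H)

lemma twistedAction_inl (a' a : A) (b : B) (h : H) :
    twistedAction c (Coprod.inl a') (b, a, h) = (b, a' * a, c (a' * a) b * ((c a b)⁻¹ * h)) :=
  rfl

lemma twistedAction_inr (b' b : B) (a : A) (h : H) :
    twistedAction c (Coprod.inr b') (b, a, h) = (b' * b, a, h) :=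
  rfl

lemma twistedAction_invCommutator (c_one_left : ∀ b, c 1 b = 1) (c_one_right : ∀ a, c a 1 = 1)
    (a : A) (b : B) (h : H) :
    twistedAction c (invCommutator a b) (1, 1, h) = (1, 1, c a b * h) := by
  simp only [invCommutator, commutatorElement_def, inv_inv, ← map_inv, map_mul,
    Equiv.Perm.mul_apply, twistedAction_inl, twistedAction_inr]
  simp [c_one_left, c_one_right]

lemma coordProd_twistedAction (ψ : H →* Coprod A B) (hψ : ∀ a b, ψ (c a b) = invCommutator a b)
    (g : Coprod A B) (s : B × A × H) :
    coordProd ψ (twistedAction c g s) = g * coordProd ψ s := by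
  induction g using Coprod.induction_on generalizing s with
  | inl a =>
    obtain ⟨b, a', h⟩ := s
    simp [twistedAction_inl, coordProd, hψ, invCommutator, commutatorElement_def, mul_assoc]
  | inr b =>
    obtain ⟨b', a, h⟩ := s
    simp [twistedAction_inr, coordProd, mul_assoc]
  | mul g₁ g₂ ih₁ ih₂ => rw [map_mul, Equiv.Perm.mul_apply, ih₁, ih₂, mul_assoc]

end TwistedAction

section KernelIsFree

variable {A B : Type*} [Group A] [Group B]

/-- Pairs of nontrivial elements of two groups; they index a basis of the kernel of
`A * B → A × B`. -/
abbrev NontrivialPair (A B : Type*) [Group A] [Group B] : Type _ :=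
  {p : A × B // p.1 ≠ 1 ∧ p.2 ≠ 1}

open Classical in
/-- The free generator indexed by the pair `(a, b)`, extended by `1` to the pairs with a trivial
entry, in accordance with the commutator `⁅a⁻¹, b⁻¹⁆` that it represents. -/
noncomputable def pairGenerator (a : A) (b : B) : FreeGroup (NontrivialPair A B) :=
  if h : a ≠ 1 ∧ b ≠ 1 then FreeGroup.of ⟨(a, b), h⟩ else 1

lemma pairGenerator_one_left (b : B) : pairGenerator (1 : A) b = 1 :=
  dif_neg fun h => h.1 rfl

lemma pairGenerator_one_right (a : A) : pairGenerator a (1 : B) = 1 :=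
  dif_neg fun h => h.2 rfl

lemma pairGenerator_coe (p : NontrivialPair A B) :
    pairGenerator p.1.1 p.1.2 = FreeGroup.of p :=
  dif_pos p.2

/-- The homomorphism to `A * B` sending the generator indexed by `(a, b)` to the commutator
`⁅a⁻¹, b⁻¹⁆`. -/
def commutatorLift (A B : Type*) [Group A] [Group B] :
    FreeGroup (NontrivialPair A B) →* Coprod A B :=
  FreeGroup.lift fun p => invCommutator p.1.1 p.1.2

lemma commutatorLift_of (p : NontrivialPair A B) :
    commutatorLift A B (FreeGroup.of p) = invCommutator p.1.1 p.1.2 :=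
  FreeGroup.lift_apply_of

lemma commutatorLift_pairGenerator (a : A) (b : B) :
    commutatorLift A B (pairGenerator a b) = invCommutator a b := by
  by_cases h : a ≠ 1 ∧ b ≠ 1
  · rw [pairGenerator, dif_pos h, commutatorLift_of]
  · obtain rfl | rfl : a = 1 ∨ b = 1 := by tauto
    · rw [pairGenerator_one_left, map_one, invCommutator_one_left]
    · rw [pairGenerator_one_right, map_one, invCommutator_one_right]

lemma twistedAction_commutatorLift (w h : FreeGroup (NontrivialPair A B)) :
    twistedAction pairGenerator (commutatorLift A B w) (1, 1, h) = (1, 1, w * h) := by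
  induction w using FreeGroup.induction_on generalizing h with
  | C1 => simp
  | of p =>
    rw [commutatorLift_of, twistedAction_invCommutator _ pairGenerator_one_left
      pairGenerator_one_right, pairGenerator_coe]
  | inv_of p ih => rw [map_inv, map_inv, Equiv.Perm.inv_eq_iff_eq, ih, mul_inv_cancel_left]
  | mul w₁ w₂ ih₁ ih₂ => rw [map_mul, map_mul, Equiv.Perm.mul_apply, ih₂, ih₁, mul_assoc]

lemma commutatorLift_injective : Function.Injective (commutatorLift A B) := by
  intro w₁ w₂ hw
  have orbit_eq := twistedAction_commutatorLift w₁ 1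
  rw [hw, twistedAction_commutatorLift] at orbit_eq
  simpa using orbit_eq.symm

lemma toProd_comp_commutatorLift : Coprod.toProd.comp (commutatorLift A B) = 1 := by
  ext p <;> simp [commutatorLift_of, invCommutator, commutatorElement_def]

lemma exists_eq_inr_mul_inl_mul_commutatorLift (g : Coprod A B) :
    ∃ b a w, g = Coprod.inr b * Coprod.inl a * commutatorLift A B w := by
  have h := coordProd_twistedAction pairGenerator _ commutatorLift_pairGenerator g (1, 1, 1)
  exact ⟨_, _, _, by simpa [coordProd] using h.symm⟩

lemma range_commutatorLift :
    (commutatorLift A B).range = (Coprod.toProd : Coprod A B →* A × B).ker := by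
  apply le_antisymm
  · rw [MonoidHom.range_le_ker_iff, toProd_comp_commutatorLift]
  · intro g hg
    obtain ⟨b, a, w, rfl⟩ := exists_eq_inr_mul_inl_mul_commutatorLift g
    have toProd_lift : Coprod.toProd (commutatorLift A B w) = 1 :=
      DFunLike.congr_fun toProd_comp_commutatorLift w
    obtain ⟨rfl, rfl⟩ : a = 1 ∧ b = 1 := by
      simpa [MonoidHom.mem_ker, toProd_lift] using hg
    exact ⟨w, by simp⟩

instance isFreeGroup_ker_toProd : IsFreeGroup (Coprod.toProd : Coprod A B →* A × B).ker :=
  IsFreeGroup.ofMulEquiv <| (MonoidHom.ofInjective commutatorLift_injective).trans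
    (MulEquiv.subgroupCongr range_commutatorLift)

end KernelIsFree

section Comap

variable {G P : Type*} [Group G] [Group P] (f : G →* P) (C : Subgroup P)

lemma isFreeGroup_ker_subgroupOf_comap [IsFreeGroup f.ker] :
    IsFreeGroup (f.ker.subgroupOf (C.comap f)) :=
  IsFreeGroup.ofMulEquiv (Subgroup.subgroupOfEquivOfLe (f.ker_le_comap C)).symm

lemma finiteIndex_ker_subgroupOf_comap [Finite C] :
    (f.ker.subgroupOf (C.comap f)).FiniteIndex := by
  have : Finite ((C.comap f).map f) :=
    Finite.Set.subset (C : Set P) (Subgroup.map_comap_le f C)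
  refine ⟨?_⟩
  change f.ker.relIndex (C.comap f) ≠ 0
  rw [Subgroup.relIndex_ker]
  exact Nat.card_pos.ne'

end Comap

theorem preimage_finite_has_free_finite_index_general (G₁ G₂ : Type*) [Group G₁] [Group G₂]
    (C : Subgroup (G₁ × G₂)) [Finite C] :
    ∃ H : Subgroup ↥(C.comap (Coprod.toProd : Coprod G₁ G₂ →* G₁ × G₂)),
      IsFreeGroup ↥H ∧ H.FiniteIndex :=
  ⟨_, isFreeGroup_ker_subgroupOf_comap Coprod.toProd C,
    finiteIndex_ker_subgroupOf_comap Coprod.toProd C⟩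

/-- For countable groups `G₁`, `G₂`, the canonical surjective
homomorphism `π : G₁ * G₂ → G₁ × G₂`, and a finite subgroup `C` of `G₁ × G₂`,
the preimage `π⁻¹(C)` contains a free subgroup of finite index. -/
theorem preimage_finite_has_free_finite_index (G₁ G₂ : Type*) [Group G₁] [Group G₂]
    [Countable G₁] [Countable G₂] (C : Subgroup (G₁ × G₂)) (hfin : Finite C) :
    ∃ H : Subgroup ↥(C.comap (Coprod.toProd : Coprod G₁ G₂ →* G₁ × G₂)),
      IsFreeGroup ↥H ∧ H.FiniteIndex :=
  preimage_finite_has_free_finite_index_general G₁ G₂ C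
end
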